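/- Let a ∈ M_n(ℚ̄F_∞), regarded as an element of M_n(ℂF_∞) via the inclusion ℚ̄ ⊂ ℂ. Then the map φ ↦ dim_φ(ker a) is continuous on the set of traces φ on F_∞ with φ(1) = 1 satisfying Lück's condition, equipped with the topology of pointwise convergence on F_∞. -/

import Mathlib

open scoped ComplexOrder ENNReal
open Filter Topology Matrix

set_option synthInstance.maxHeartbeats 1000000
set_option maxHeartbeats 1000000

noncomputable section

instance piLpCompleteSpace {ι : Type*} [Fintype ι] (p : ℝ≥0∞) (β : ι → Type*)
    [∀ i, UniformSpace (β i)] [∀ i, CompleteSpace (β i)] : CompleteSpace (PiLp p β) :=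
  PiLp.completeSpace p β

/-- `φ : G → ℂ` is of positive type: for every finite family `g₁, …, g_m` of elements of
`G`, the matrix `(φ (gᵢ⁻¹ gⱼ))_{i,j}` is positive semidefinite. -/
def IsPosType {G : Type*} [Group G] (φ : G → ℂ) : Prop :=
  ∀ (m : ℕ) (g : Fin m → G), (Matrix.of fun i j => φ ((g i)⁻¹ * g j)).PosSemidef

/-- A trace on a (discrete) group: a function of positive type, constant on conjugacy
classes. -/
def IsGroupTrace {G : Type*} [Group G] (φ : G → ℂ) : Prop :=
  IsPosType φ ∧ ∀ g h : G, φ (h * g * h⁻¹) = φ g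

/-- GNS representation data for a function `φ` on a group `G`: a Hilbert space `H`, a
unital algebra morphism `π` from `ℂG = MonoidAlgebra ℂ G` to the bounded operators on `H`
sending group elements to unitaries (this is the condition `star_of`), and a cyclic vector
`ξ` whose matrix coefficient is (the linear extension of) `φ`. -/
structure GNSRep (G : Type*) [Group G] (φ : G → ℂ) where
  H : Type
  [instNormed : NormedAddCommGroup H]
  [instInner : InnerProductSpace ℂ H]
  [instComplete : CompleteSpace H]
  π : MonoidAlgebra ℂ G →ₐ[ℂ] (H →L[ℂ] H)
  ξ : H
  star_of : ∀ g : G, star (π (MonoidAlgebra.of ℂ G g)) = π (MonoidAlgebra.of ℂ G g⁻¹)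
  inner_eq : ∀ g : G, (inner ℂ ξ (π (MonoidAlgebra.of ℂ G g) ξ) : ℂ) = φ g
  cyclic : Dense (Set.range fun x : MonoidAlgebra ℂ G => π x ξ)

attribute [instance] GNSRep.instNormed GNSRep.instInner GNSRep.instComplete

/-- The vector `ξᵢ ∈ Hⁿ`: the cyclic vector `ξ` in the `i`-th summand, `0` elsewhere. -/
def GNSRep.vec {G : Type*} [Group G] {φ : G → ℂ} (R : GNSRep G φ) {n : ℕ} (i : Fin n) :
    PiLp 2 (fun _ : Fin n => R.H) :=
  (PiLp.continuousLinearEquiv 2 ℂ (fun _ : Fin n => R.H)).symm (Pi.single i R.ξ)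

/-- `|x| = (x* x)^{1/2}`, via the continuous functional calculus. -/
def cfcAbs {A : Type*} [CStarAlgebra A] (x : A) : A := cfc Real.sqrt (star x * x)

/-- The set of continuous majorants of `ln₊` on `[0,∞)`.  (Recall that `Real.log 0 = 0`,
so that `Real.log` agrees with `ln₊` on `[0,∞)`.) -/
def lnPlusMajorants : Set (ℝ → ℝ) :=
  {g | ContinuousOn g (Set.Ici 0) ∧ ∀ t ∈ Set.Ici (0:ℝ), Real.log t ≤ g t}

/-- The action of a matrix `a ∈ Mₙ(R)` on the Hilbert space `H'ⁿ` (with its `ℓ²` inner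
product) induced by a morphism `π : R → B(H')`: `(π_n(a) v)_i = Σ_j π(a i j) (v j)`. -/
def matAct {R H' : Type*} [Ring R] [Algebra ℂ R] [NormedAddCommGroup H']
    [InnerProductSpace ℂ H'] {n : ℕ}
    (π : R →ₐ[ℂ] (H' →L[ℂ] H')) (a : Matrix (Fin n) (Fin n) R) :
    PiLp 2 (fun _ : Fin n => H') →L[ℂ] PiLp 2 (fun _ : Fin n => H') :=
  (PiLp.continuousLinearEquiv 2 ℂ _).symm.toContinuousLinearMap ∘L
    (ContinuousLinearMap.pi fun i => ∑ j, (π (a i j)).comp (ContinuousLinearMap.proj j)) ∘L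
    (PiLp.continuousLinearEquiv 2 ℂ _).toContinuousLinearMap

/-- `(φ ⊗ Trₙ)(ln₊ |a|) := inf { Σᵢ ⟨ξᵢ, g(|π(a)|) ξᵢ⟩ : g : [0,∞) → ℝ continuous, g ≥ ln₊ }`,
an element of `ℝ ∪ {−∞}`, computed in the GNS representation `R`. -/
def GNSRep.lnPlusQ {G : Type*} [Group G] {φ : G → ℂ} (R : GNSRep G φ) {n : ℕ}
    (a : Matrix (Fin n) (Fin n) (MonoidAlgebra ℂ G)) : EReal :=
  ⨅ g ∈ lnPlusMajorants,
    ((∑ i, (inner ℂ (R.vec i) (cfc g (cfcAbs (matAct R.π a)) (R.vec i)) : ℂ)).re : EReal)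

/-- A function `φ` on `G` satisfies Lück's condition if `(φ ⊗ Trₙ)(ln₊|a|) ≥ 0` for every
`n ≥ 1` and every `a ∈ Mₙ(ℤG)` (an `a ∈ Mₙ(ℂG)` whose coefficients are all integers),
where the quantity is computed in any GNS representation of `φ`. -/
def SatisfiesLueck {G : Type*} [Group G] (φ : G → ℂ) : Prop :=
  ∀ (n : ℕ), 0 < n → ∀ a : Matrix (Fin n) (Fin n) (MonoidAlgebra ℂ G),
    (∀ (i j : Fin n) (g : G), ∃ m : ℤ, (a i j).coeff g = (m : ℂ)) →
    ∀ R : GNSRep G φ, 0 ≤ R.lnPlusQ a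

/-- `dim_φ(ker a) := inf { Σᵢ ⟨ξᵢ, h(|π(a)|) ξᵢ⟩ : h : [0,∞) → [0,1] continuous, h 0 = 1 }`,
the von Neumann dimension of the kernel of `a`, computed in the GNS representation `R`. -/
def GNSRep.kerDim {G : Type*} [Group G] {φ : G → ℂ} (R : GNSRep G φ) {n : ℕ}
    (a : Matrix (Fin n) (Fin n) (MonoidAlgebra ℂ G)) : ℝ :=
  sInf {r : ℝ | ∃ h : ℝ → ℝ, ContinuousOn h (Set.Ici 0) ∧
    (∀ t ∈ Set.Ici (0:ℝ), h t ∈ Set.Icc (0:ℝ) 1) ∧ h 0 = 1 ∧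
    r = (∑ i, (inner ℂ (R.vec i) (cfc h (cfcAbs (matAct R.π a)) (R.vec i)) : ℂ)).re}

section RepAlgebra

set_option linter.all false

variable {G : Type*} [Group G]

lemma matAct_apply' {R H' : Type*} [Ring R] [Algebra ℂ R] [NormedAddCommGroup H']
    [InnerProductSpace ℂ H'] {n : ℕ}
    (π : R →ₐ[ℂ] (H' →L[ℂ] H')) (a : Matrix (Fin n) (Fin n) R)
    (v : PiLp 2 (fun _ : Fin n => H')) (i : Fin n) :
    matAct π a v i = ∑ j, π (a i j) (v j) := by
  simp [matAct]

/-- `matAct` as an algebra morphism. -/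
def matHom {R H' : Type*} [Ring R] [Algebra ℂ R] [NormedAddCommGroup H']
    [InnerProductSpace ℂ H'] {n : ℕ} (π : R →ₐ[ℂ] (H' →L[ℂ] H')) :
    Matrix (Fin n) (Fin n) R →ₐ[ℂ]
      (PiLp 2 (fun _ : Fin n => H') →L[ℂ] PiLp 2 (fun _ : Fin n => H')) :=
  AlgHom.ofLinearMap
    { toFun := matAct π
      map_add' := by
        intro a b; ext v i
        simp [matAct_apply', Finset.sum_add_distrib]
      map_smul' := by
        intro c a; ext v i
        simp [matAct_apply', Finset.smul_sum] }
    (by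
      ext v i
      have : ∀ j, π ((1 : Matrix (Fin n) (Fin n) R) i j) (v j) = if i = j then v j else 0 := by
        intro j; by_cases h : i = j <;> simp [Matrix.one_apply, h]
      simp [matAct_apply', this])
    (by
      intro a b; ext v i
      simp only [LinearMap.coe_mk, AddHom.coe_mk, ContinuousLinearMap.mul_apply, matAct_apply',
        Matrix.mul_apply, map_sum, map_mul, ContinuousLinearMap.sum_apply]
      exact Finset.sum_comm)

@[simp] lemma matHom_apply {R H' : Type*} [Ring R] [Algebra ℂ R] [NormedAddCommGroup H']
    [InnerProductSpace ℂ H'] {n : ℕ} (π : R →ₐ[ℂ] (H' →L[ℂ] H'))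
    (a : Matrix (Fin n) (Fin n) R) : matHom π a = matAct π a := rfl

/-- The involution of the group algebra. -/
def gstar : MonoidAlgebra ℂ G →+ MonoidAlgebra ℂ G :=
  MonoidAlgebra.liftNC
    ((algebraMap ℂ (MonoidAlgebra ℂ G)).comp (starRingEnd ℂ)).toAddMonoidHom
    (fun g => MonoidAlgebra.of ℂ G g⁻¹)

lemma gstar_single (g : G) (c : ℂ) :
    gstar (MonoidAlgebra.single g c) = MonoidAlgebra.single g⁻¹ (starRingEnd ℂ c) := by
  simp [gstar, MonoidAlgebra.single_mul_single]

/-- The involution on matrices over the group algebra. -/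
def mstar {ι : Type*} (a : Matrix ι ι (MonoidAlgebra ℂ G)) : Matrix ι ι (MonoidAlgebra ℂ G) :=
  (a.map gstar)ᵀ

namespace GNSRep

variable {φ : G → ℂ} (R : GNSRep G φ)

lemma pi_single (g : G) (c : ℂ) :
    R.π (MonoidAlgebra.single g c) = c • R.π (MonoidAlgebra.of ℂ G g) := by
  rw [← map_smul, MonoidAlgebra.smul_of]

lemma star_pi (x : MonoidAlgebra ℂ G) : star (R.π x) = R.π (gstar x) := by
  induction x using MonoidAlgebra.induction_linear with
  | zero => simp
  | add x y hx hy => simp [hx, hy]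
  | single g c => rw [gstar_single, pi_single, pi_single, star_smul, R.star_of]; rfl

lemma star_matAct {n : ℕ} (a : Matrix (Fin n) (Fin n) (MonoidAlgebra ℂ G)) :
    star (matAct R.π a) = matAct R.π (mstar a) := by
  symm
  rw [ContinuousLinearMap.star_eq_adjoint, ContinuousLinearMap.eq_adjoint_iff]
  intro x y
  simp only [PiLp.inner_apply, matAct_apply', sum_inner, inner_sum, mstar, Matrix.transpose_apply,
    Matrix.map_apply, ← star_pi, ContinuousLinearMap.star_eq_adjoint,
    ContinuousLinearMap.adjoint_inner_left]
  exact Finset.sum_comm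

/-- The state on the group algebra. -/
def ψ (x : MonoidAlgebra ℂ G) : ℂ := inner ℂ R.ξ (R.π x R.ξ)

lemma ψ_add (x y : MonoidAlgebra ℂ G) : R.ψ (x + y) = R.ψ x + R.ψ y := by
  simp [ψ, inner_add_right]

lemma ψ_single (g : G) (c : ℂ) : R.ψ (MonoidAlgebra.single g c) = c * φ g := by
  rw [ψ, pi_single, ContinuousLinearMap.smul_apply, inner_smul_right, R.inner_eq]

lemma ψ_smul (c : ℂ) (x : MonoidAlgebra ℂ G) : R.ψ (c • x) = c * R.ψ x := by
  simp [ψ, inner_smul_right]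

lemma ψ_zero : R.ψ 0 = 0 := by simp [ψ]

lemma ψ_sum {ι : Type*} (s : Finset ι) (f : ι → MonoidAlgebra ℂ G) :
    R.ψ (∑ i ∈ s, f i) = ∑ i ∈ s, R.ψ (f i) := by
  simp [ψ, inner_sum]

lemma ψ_eq (x : MonoidAlgebra ℂ G) : R.ψ x = x.coeff.sum fun g c => c * φ g := by
  conv_lhs => rw [← MonoidAlgebra.sum_coeff_single x, Finsupp.sum, ψ_sum]
  simp [ψ_single, Finsupp.sum]

lemma ψ_comm (hφ : IsGroupTrace φ) (x y : MonoidAlgebra ℂ G) : R.ψ (x * y) = R.ψ (y * x) := by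
  induction x using MonoidAlgebra.induction_linear with
  | zero => simp
  | add x z hx hz => simp [add_mul, mul_add, ψ_add, hx, hz]
  | single g c =>
    induction y using MonoidAlgebra.induction_linear with
    | zero => simp
    | add x z hx hz => simp [add_mul, mul_add, ψ_add, hx, hz]
    | single h d =>
      rw [MonoidAlgebra.single_mul_single, MonoidAlgebra.single_mul_single, ψ_single, ψ_single]
      have := hφ.2 (g * h) h
      rw [← this, mul_comm c d]; group

lemma ψ_trace_comm (hφ : IsGroupTrace φ) {ι : Type*} [Fintype ι]
    (x y : Matrix ι ι (MonoidAlgebra ℂ G)) :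
    R.ψ (Matrix.trace (x * y)) = R.ψ (Matrix.trace (y * x)) := by
  simp only [Matrix.trace, Matrix.diag, Matrix.mul_apply, ψ_sum]
  rw [Finset.sum_comm]
  simp_rw [fun i j => R.ψ_comm hφ (x i j) (y j i)]

/-- The (real part of the) unnormalised trace functional on `B(Hⁿ)`. -/
def τ (n : ℕ) (A : PiLp 2 (fun _ : Fin n => R.H) →L[ℂ] PiLp 2 (fun _ : Fin n => R.H)) : ℝ :=
  (∑ i, (inner ℂ (R.vec i) (A (R.vec i)) : ℂ)).re

lemma τ_add {n : ℕ} (A B) : R.τ n (A + B) = R.τ n A + R.τ n B := by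
  simp [τ, inner_add_right, Finset.sum_add_distrib]

lemma τ_sub {n : ℕ} (A B) : R.τ n (A - B) = R.τ n A - R.τ n B := by
  simp [τ, inner_sub_right, Finset.sum_sub_distrib]

lemma τ_smul {n : ℕ} (c : ℝ) (A) : R.τ n (c • A) = c * R.τ n A := by
  simp [τ, inner_smul_right_eq_smul, ← Finset.smul_sum, ← Finset.mul_sum]

lemma τ_mono {n : ℕ} {A B} (h : A ≤ B) : R.τ n A ≤ R.τ n B := by
  rw [ContinuousLinearMap.le_def] at h
  have := τ_sub R B A
  have h2 : 0 ≤ R.τ n (B - A) := by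
    simp only [τ, Complex.re_sum]
    refine Finset.sum_nonneg fun i _ => ?_
    exact h.re_inner_nonneg_right _
  linarith

lemma τ_matAct {n : ℕ} (x : Matrix (Fin n) (Fin n) (MonoidAlgebra ℂ G)) :
    R.τ n (matAct R.π x) = (R.ψ x.trace).re := by
  have key : ∀ i, (inner ℂ (R.vec i) (matAct R.π x (R.vec i)) : ℂ) = R.ψ (x i i) := by
    intro i
    have hv : ∀ j, (R.vec i : PiLp 2 (fun _ : Fin n => R.H)) j = if j = i then R.ξ else 0 := by
      intro j; by_cases h : j = i
      · subst h; simp [vec]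
      · simp [vec, h]
    simp only [PiLp.inner_apply, matAct_apply', hv]
    rw [Finset.sum_eq_single i]
    · rw [Finset.sum_eq_single i] <;> simp +contextual [ψ]
    · simp +contextual
    · simp
  simp [τ, key, Matrix.trace, ψ_sum]

lemma τ_one {n : ℕ} (h1 : φ 1 = 1) : R.τ n 1 = n := by
  have := R.τ_matAct (n := n) 1
  rw [← matHom_apply, map_one] at this
  rw [this, Matrix.trace_one, Fintype.card_fin, MonoidAlgebra.natCast_def, ψ_single, h1]
  simp

/-- The `ℓ¹` norm on the group algebra. -/
def _root_.l1 (x : MonoidAlgebra ℂ G) : ℝ := x.coeff.sum fun _ c => ‖c‖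

lemma norm_of_le (g : G) (v : R.H) : ‖R.π (MonoidAlgebra.of ℂ G g) v‖ = ‖v‖ := by
  have : (inner ℂ (R.π (MonoidAlgebra.of ℂ G g) v) (R.π (MonoidAlgebra.of ℂ G g) v) : ℂ)
      = inner ℂ v v := by
    rw [← ContinuousLinearMap.adjoint_inner_right, ← ContinuousLinearMap.star_eq_adjoint, R.star_of,
      ← ContinuousLinearMap.mul_apply, ← map_mul, ← map_mul,
      inv_mul_cancel, map_one, map_one, ContinuousLinearMap.one_apply]
  rw [inner_self_eq_norm_sq_to_K, inner_self_eq_norm_sq_to_K] at this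
  have h2 : ‖R.π (MonoidAlgebra.of ℂ G g) v‖ ^ 2 = ‖v‖ ^ 2 := by exact_mod_cast this
  exact (sq_eq_sq₀ (norm_nonneg _) (norm_nonneg _)).1 h2

lemma norm_pi_le (x : MonoidAlgebra ℂ G) (v : R.H) : ‖R.π x v‖ ≤ l1 x * ‖v‖ := by
  conv_lhs => rw [← MonoidAlgebra.sum_coeff_single x, Finsupp.sum, map_sum,
    ContinuousLinearMap.sum_apply]
  refine (norm_sum_le _ _).trans ?_
  rw [l1, Finsupp.sum, Finset.sum_mul]
  refine Finset.sum_le_sum fun g _ => ?_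
  rw [pi_single, ContinuousLinearMap.smul_apply, norm_smul, norm_of_le]

lemma _root_.l1_nonneg (x : MonoidAlgebra ℂ G) : 0 ≤ l1 x :=
  Finset.sum_nonneg fun _ _ => norm_nonneg _

/-- A uniform bound on `π(a)* π(a)`. -/
def _root_.mbd {n : ℕ} (a : Matrix (Fin n) (Fin n) (MonoidAlgebra ℂ G)) : ℝ :=
  ∑ i, ∑ j, l1 (a i j)

lemma _root_.mbd_nonneg {n : ℕ} (a : Matrix (Fin n) (Fin n) (MonoidAlgebra ℂ G)) : 0 ≤ mbd a :=
  Finset.sum_nonneg fun _ _ => Finset.sum_nonneg fun _ _ => l1_nonneg _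

lemma norm_matAct_le {n : ℕ} (a : Matrix (Fin n) (Fin n) (MonoidAlgebra ℂ G)) :
    ‖matAct R.π a‖ ≤ mbd a := by
  refine ContinuousLinearMap.opNorm_le_bound _ (mbd_nonneg a) fun v => ?_
  have h1 : ‖matAct R.π a v‖ ≤ ∑ i, ‖matAct R.π a v i‖ := by
    rw [PiLp.norm_eq_of_L2]
    refine Real.sqrt_le_iff.2 ⟨Finset.sum_nonneg fun _ _ => norm_nonneg _, ?_⟩
    exact Finset.sum_sq_le_sq_sum_of_nonneg fun _ _ => norm_nonneg _
  refine h1.trans ?_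
  rw [mbd, Finset.sum_mul]
  refine Finset.sum_le_sum fun i _ => ?_
  rw [matAct_apply', Finset.sum_mul]
  refine (norm_sum_le _ _).trans (Finset.sum_le_sum fun j _ => ?_)
  refine (R.norm_pi_le _ _).trans ?_
  exact mul_le_mul_of_nonneg_left (PiLp.norm_apply_le v j) (l1_nonneg _)

end GNSRep

end RepAlgebra

section Functional

set_option linter.all false

open Set

lemma cfc_cfcAbs {A : Type*} [CStarAlgebra A] [PartialOrder A] [StarOrderedRing A] (x : A)
    {h : ℝ → ℝ} (hh : ContinuousOn h (Ici 0)) :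
    cfc h (cfcAbs x) = cfc (fun s => h (Real.sqrt s)) (star x * x) := by
  rw [cfcAbs]
  refine (cfc_comp' h Real.sqrt (star x * x) ?_ ?_ ?_).symm
  · exact hh.mono (by rintro _ ⟨y, -, rfl⟩; exact Real.sqrt_nonneg y)
  · exact Real.continuous_sqrt.continuousOn
  · exact IsSelfAdjoint.star_mul_self x

lemma spec_star_mul {A : Type*} [CStarAlgebra A] [PartialOrder A] [StarOrderedRing A] (x : A)
    {B : ℝ} (hB : ‖x‖ ≤ B) : spectrum ℝ (star x * x) ⊆ Icc 0 (B ^ 2) := by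
  intro s hs
  refine ⟨spectrum_nonneg_of_nonneg (star_mul_self_nonneg x) hs, ?_⟩
  have h1 : star x * x ≤ algebraMap ℝ A (B ^ 2) := by
    have := IsSelfAdjoint.le_algebraMap_norm_self (IsSelfAdjoint.star_mul_self x)
    refine this.trans ?_
    refine algebraMap_mono _ ?_
    rw [CStarRing.norm_star_mul_self, ← sq]
    gcongr
  exact (le_algebraMap_iff_spectrum_le (IsSelfAdjoint.star_mul_self x)).1 h1 s hs

variable {G : Type*} [Group G]

namespace GNSRep

variable {φ : G → ℂ} (R : GNSRep G φ)

/-- The spectral functional of `a* a`. -/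
def Lam {n : ℕ} (a : Matrix (Fin n) (Fin n) (MonoidAlgebra ℂ G)) (f : ℝ → ℝ) : ℝ :=
  R.τ n (cfc f (star (matAct R.π a) * matAct R.π a))

variable {n : ℕ} (a : Matrix (Fin n) (Fin n) (MonoidAlgebra ℂ G))

lemma spec_subset :
    spectrum ℝ (star (matAct R.π a) * matAct R.π a) ⊆ Icc 0 (mbd a ^ 2) :=
  spec_star_mul _ (R.norm_matAct_le a)

lemma spec_subset' :
    spectrum ℝ (star (matAct R.π a) * matAct R.π a) ⊆ Ici 0 :=
  (R.spec_subset a).trans Icc_subset_Ici_self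

lemma Lam_mono {f g : ℝ → ℝ} (hf : ContinuousOn f (Ici 0)) (hg : ContinuousOn g (Ici 0))
    (h : ∀ s ∈ Icc 0 (mbd a ^ 2), f s ≤ g s) : R.Lam a f ≤ R.Lam a g :=
  R.τ_mono (cfc_mono (fun s hs => h s (R.spec_subset a hs)) (hf.mono (R.spec_subset' a))
    (hg.mono (R.spec_subset' a)))

lemma Lam_const (h1 : φ 1 = 1) (c : ℝ) : R.Lam a (fun _ => c) = c * n := by
  rw [Lam, cfc_const _ _ (IsSelfAdjoint.star_mul_self _), Algebra.algebraMap_eq_smul_one, τ_smul,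
    τ_one _ h1]

lemma Lam_add {f g : ℝ → ℝ} (hf : ContinuousOn f (Ici 0)) (hg : ContinuousOn g (Ici 0)) :
    R.Lam a (fun s => f s + g s) = R.Lam a f + R.Lam a g := by
  rw [Lam, cfc_add _ _ _ (hf.mono (R.spec_subset' a)) (hg.mono (R.spec_subset' a)), τ_add]; rfl

lemma Lam_mul {f : ℝ → ℝ} (c : ℝ) (hf : ContinuousOn f (Ici 0)) :
    R.Lam a (fun s => c * f s) = c * R.Lam a f := by
  rw [Lam, cfc_const_mul _ _ _ (hf.mono (R.spec_subset' a)), τ_smul]; rfl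

lemma Lam_near (h1 : φ 1 = 1) {f g : ℝ → ℝ} (hf : ContinuousOn f (Ici 0))
    (hg : ContinuousOn g (Ici 0)) {η : ℝ} (h : ∀ s ∈ Icc 0 (mbd a ^ 2), |f s - g s| ≤ η) :
    |R.Lam a f - R.Lam a g| ≤ η * n := by
  have e1 := R.Lam_mono a hf (hg.add (continuousOn_const (c := η)))
    (fun s hs => by have := abs_le.1 (h s hs); simp; linarith)
  have e2 := R.Lam_mono a hg (hf.add (continuousOn_const (c := η)))
    (fun s hs => by have := abs_le.1 (h s hs); simp; linarith)
  have e3 := R.Lam_add a hg (continuousOn_const (c := η))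
  have e4 := R.Lam_add a hf (continuousOn_const (c := η))
  rw [Lam_const _ _ h1] at e3 e4
  change _ ≤ R.Lam a (fun s => g s + η) at e1
  change _ ≤ R.Lam a (fun s => f s + η) at e2
  rw [abs_le]; constructor <;> linarith

lemma Lam_poly (p : Polynomial ℝ) :
    R.Lam a (fun s => p.eval s)
      = (R.ψ (Matrix.trace (Polynomial.aeval (mstar a * a) p))).re := by
  rw [Lam, cfc_polynomial p _ (IsSelfAdjoint.star_mul_self _), ← τ_matAct, star_matAct]
  congr 1
  rw [← matHom_apply, ← matHom_apply, ← map_mul]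
  exact Polynomial.aeval_algHom_apply ((matHom R.π).restrictScalars ℝ) (mstar a * a) p

lemma kerDim_eq : R.kerDim a = sInf {r : ℝ | ∃ f : ℝ → ℝ, ContinuousOn f (Ici 0) ∧
    (∀ t ∈ Ici (0:ℝ), f t ∈ Icc (0:ℝ) 1) ∧ f 0 = 1 ∧ r = R.Lam a f} := by
  rw [kerDim]
  congr 1
  ext r
  constructor
  · rintro ⟨h, hc, h1, h0, rfl⟩
    refine ⟨fun s => h (Real.sqrt s), ?_, fun t _ => h1 _ (Real.sqrt_nonneg t), by simpa using h0, ?_⟩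
    · exact hc.comp Real.continuous_sqrt.continuousOn fun x _ => Real.sqrt_nonneg x
    · rw [cfc_cfcAbs _ hc]; rfl
  · rintro ⟨f, hc, h1, h0, rfl⟩
    have hc' : ContinuousOn (fun t => f (t ^ 2)) (Ici (0:ℝ)) :=
      hc.comp (by fun_prop) fun x _ => sq_nonneg x
    refine ⟨fun t => f (t ^ 2), hc', fun t _ => h1 _ (sq_nonneg t), by simpa using h0, ?_⟩
    rw [cfc_cfcAbs _ hc', Lam, τ]
    congr 2
    ext i
    congr 2
    refine cfc_congr fun s hs => ?_
    have : 0 ≤ s := R.spec_subset' a hs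
    simp [Real.sq_sqrt this]

lemma Lam_nonneg {f : ℝ → ℝ} (hf : ContinuousOn f (Ici 0)) (h : ∀ s ∈ Ici (0:ℝ), 0 ≤ f s) :
    0 ≤ R.Lam a f := by
  have := R.Lam_mono a (f := fun s => 0 * f s) (continuousOn_const.mul hf) hf
    (fun s hs => by simpa using h s hs.1)
  rw [Lam_mul _ _ _ hf] at this
  simpa using this

lemma kerDim_le {f : ℝ → ℝ} (hf : ContinuousOn f (Ici 0))
    (h : ∀ t ∈ Ici (0:ℝ), f t ∈ Icc (0:ℝ) 1) (h0 : f 0 = 1) : R.kerDim a ≤ R.Lam a f := by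
  rw [kerDim_eq]
  refine csInf_le ⟨0, ?_⟩ ⟨f, hf, h, h0, rfl⟩
  rintro _ ⟨f, hc, h1, h0, rfl⟩
  exact R.Lam_nonneg a hc fun s hs => (h1 s hs).1

lemma le_kerDim {c : ℝ} (H : ∀ f : ℝ → ℝ, ContinuousOn f (Ici 0) →
    (∀ t ∈ Ici (0:ℝ), f t ∈ Icc (0:ℝ) 1) → f 0 = 1 → c ≤ R.Lam a f) : c ≤ R.kerDim a := by
  rw [kerDim_eq]
  refine le_csInf ⟨_, fun _ => 1, continuousOn_const, by simp, rfl, rfl⟩ ?_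
  rintro _ ⟨f, hc, h1, h0, rfl⟩
  exact H f hc h1 h0

/-- The resolvent functions. -/
def _root_.rsv (k : ℝ) (s : ℝ) : ℝ := (1 + k * s)⁻¹

lemma _root_.rsv_cont {k : ℝ} (hk : 0 ≤ k) : ContinuousOn (rsv k) (Ici 0) := by
  unfold rsv
  refine ContinuousOn.inv₀ (by fun_prop) fun s hs => ?_
  have : 0 ≤ k * s := mul_nonneg hk hs
  positivity

lemma _root_.rsv_mem {k : ℝ} (hk : 0 ≤ k) : ∀ t ∈ Ici (0:ℝ), rsv k t ∈ Icc (0:ℝ) 1 := by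
  intro s hs
  have : 0 ≤ k * s := mul_nonneg hk hs
  unfold rsv
  exact ⟨by positivity, inv_le_one_of_one_le₀ (by linarith)⟩

lemma _root_.rsv_anti {k l : ℝ} (hk : 0 ≤ k) (hkl : k ≤ l) {s : ℝ} (hs : 0 ≤ s) :
    rsv l s ≤ rsv k s := by
  unfold rsv
  have : 0 ≤ k * s := mul_nonneg hk hs
  gcongr

lemma kerDim_tendsto (h1 : φ 1 = 1) :
    Tendsto (fun k : ℝ => R.Lam a (rsv k)) atTop (𝓝 (R.kerDim a)) := by
  have hge : ∀ k : ℝ, 0 ≤ k → R.kerDim a ≤ R.Lam a (rsv k) := fun k hk =>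
    R.kerDim_le a (rsv_cont hk) (rsv_mem hk) (by simp [rsv])
  have hanti : ∀ k l : ℝ, 0 ≤ k → k ≤ l → R.Lam a (rsv l) ≤ R.Lam a (rsv k) := fun k l hk hkl =>
    R.Lam_mono a (rsv_cont (hk.trans hkl)) (rsv_cont hk) fun s hs => rsv_anti hk hkl hs.1
  rw [Metric.tendsto_atTop]
  intro ε hε
  -- some k with `Lam (rsv k) < kerDim + ε`
  suffices ∃ k : ℝ, 0 ≤ k ∧ R.Lam a (rsv k) < R.kerDim a + ε by
    obtain ⟨k, hk, hlt⟩ := this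
    refine ⟨k, fun l hl => ?_⟩
    rw [Real.dist_eq, abs_lt]
    have := hge l (hk.trans hl)
    have := hanti k l hk hl
    constructor <;> linarith
  by_contra hcon
  push Not at hcon
  have hc : R.kerDim a + ε / 2 ≤ R.kerDim a := by
    refine R.le_kerDim a fun f hf hf1 hf0 => ?_
    set η : ℝ := ε / (2 * (n + 1)) with hη
    have hηpos : 0 < η := by positivity
    have hηn : η * n ≤ ε / 2 := by
      have : η * (n + 1) = ε / 2 := by rw [hη]; field_simp
      nlinarith
    have hcont : ContinuousWithinAt f (Ici 0) 0 := hf 0 (by simp)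
    obtain ⟨δ, hδ, hδf⟩ := Metric.continuousWithinAt_iff.1 hcont η hηpos
    set k : ℝ := 1 / (δ * η) with hk
    have hkpos : 0 < k := by positivity
    have hle := R.Lam_mono a (f := rsv k) (g := fun s => f s + η) (rsv_cont hkpos.le)
      (hf.add continuousOn_const) (fun s hs => by
        by_cases hsd : s < δ
        · have := hδf (x := s) hs.1 (by rw [Real.dist_eq, sub_zero, abs_of_nonneg hs.1]; exact hsd)
          rw [hf0, Real.dist_eq, abs_lt] at this
          have := (rsv_mem hkpos.le s hs.1).2
          linarith
        · push Not at hsd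
          have h2 : rsv k s ≤ η := by
            unfold rsv
            have : η⁻¹ ≤ k * s := by
              calc η⁻¹ = k * δ := by rw [hk]; field_simp
                _ ≤ k * s := by gcongr
            calc (1 + k * s)⁻¹ ≤ (η⁻¹)⁻¹ := by gcongr; linarith
              _ = η := inv_inv η
          have := (hf1 s hs.1).1
          linarith)
    rw [R.Lam_add a hf continuousOn_const, Lam_const _ _ h1] at hle
    have := hcon k hkpos.le
    linarith
  linarith

end GNSRep

end Functional

section Compare

set_option linter.all false

open Set

lemma cfc_resolvent_anti {A : Type*} [CStarAlgebra A] [PartialOrder A] [StarOrderedRing A]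
    {x y : A} (hx : 0 ≤ x) (hxy : x ≤ y) :
    cfc (fun s : ℝ => (1 + s)⁻¹) y ≤ cfc (fun s : ℝ => (1 + s)⁻¹) x := by
  have hy : 0 ≤ y := hx.trans hxy
  have hc : ∀ z : A, 0 ≤ z → ContinuousOn (fun s : ℝ => (1 + s)⁻¹) (spectrum ℝ z) := by
    intro z hz
    refine ContinuousOn.inv₀ (by fun_prop) fun s hs => ?_
    have : 0 ≤ s := spectrum_nonneg_of_nonneg hz hs
    positivity
  have key : ∀ z : A, 0 ≤ z → cfcₙ (fun x : ℝ => 1 - (1 + x)⁻¹) z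
      = 1 - cfc (fun s : ℝ => (1 + s)⁻¹) z := by
    intro z hz
    have hcz := hc z hz
    have hsa : IsSelfAdjoint z := .of_nonneg hz
    rw [cfcₙ_eq_cfc (hf := ?_) (hf0 := by simp), cfc_sub _ _ z (by fun_prop) hcz,
      cfc_const_one ℝ z]
    · refine ContinuousOn.sub (by fun_prop) ?_
      refine ContinuousOn.inv₀ (by fun_prop) fun s hs => ?_
      have : 0 ≤ s := quasispectrum_nonneg_of_nonneg z hz s hs
      positivity
  have := CFC.monotoneOn_one_sub_one_add_inv_real (A := A) hx hy hxy
  rw [key x hx, key y hy] at this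
  exact (sub_le_sub_iff_left _).1 this

lemma cfc_rsv {A : Type*} [CStarAlgebra A] [PartialOrder A] [StarOrderedRing A]
    {x : A} (hx : 0 ≤ x) {k : ℝ} (hk : 0 ≤ k) :
    cfc (rsv k) x = cfc (fun s : ℝ => (1 + s)⁻¹) (k • x) := by
  have hsa : IsSelfAdjoint x := .of_nonneg hx
  refine cfc_comp_smul k (fun s : ℝ => (1 + s)⁻¹) x ?_ hsa
  refine ContinuousOn.inv₀ (by fun_prop) ?_
  rintro _ ⟨s, hs, rfl⟩
  have : 0 ≤ s := spectrum_nonneg_of_nonneg hx hs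
  simp only [smul_eq_mul]
  positivity

variable {G : Type*} [Group G]

lemma gstar_gstar (x : MonoidAlgebra ℂ G) : gstar (gstar x) = x := by
  induction x using MonoidAlgebra.induction_linear with
  | zero => simp
  | add x y hx hy => simp [hx, hy]
  | single g c => simp [gstar_single]

lemma mstar_mstar {ι : Type*} (a : Matrix ι ι (MonoidAlgebra ℂ G)) : mstar (mstar a) = a := by
  ext i j : 2
  simp [mstar, gstar_gstar]

namespace GNSRep

variable {φ : G → ℂ} (R : GNSRep G φ)

lemma ψ_rsmul (c : ℝ) (x : MonoidAlgebra ℂ G) : R.ψ (c • x) = (c : ℂ) * R.ψ x := by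
  rw [← ψ_smul]
  congr 1

lemma ψ_trace_aeval {ι : Type*} [Fintype ι] [DecidableEq ι]
    (x : Matrix ι ι (MonoidAlgebra ℂ G)) (p : Polynomial ℝ) :
    R.ψ (Matrix.trace (Polynomial.aeval x p))
      = ∑ k ∈ Finset.range (p.natDegree + 1), (p.coeff k : ℂ) * R.ψ (Matrix.trace (x ^ k)) := by
  rw [Polynomial.aeval_eq_sum_range, Matrix.trace_sum, ψ_sum]
  refine Finset.sum_congr rfl fun k _ => ?_
  rw [Matrix.trace_smul, ψ_rsmul]

lemma trace_pow_comm (hφ : IsGroupTrace φ) {ι : Type*} [Fintype ι] [DecidableEq ι]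
    (x y : Matrix ι ι (MonoidAlgebra ℂ G)) (k : ℕ) :
    R.ψ (Matrix.trace ((x * y) ^ k)) = R.ψ (Matrix.trace ((y * x) ^ k)) := by
  cases k with
  | zero => simp
  | succ k =>
    have e : (x * y) ^ (k + 1) = x * (y * x) ^ k * y := by
      rw [pow_succ, ← mul_assoc, mul_pow_mul]
    have e2 : y * (x * (y * x) ^ k) = (y * x) ^ (k + 1) := by
      rw [pow_succ', mul_assoc]
    rw [e, ψ_trace_comm R hφ _ y, e2]

variable {n : ℕ} (a : Matrix (Fin n) (Fin n) (MonoidAlgebra ℂ G))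

lemma Lam_eq_sum (h1 : φ 1 = 1) {N d : ℕ} (T : Matrix (Fin N) (Fin N) (MonoidAlgebra ℂ G))
    (b : Fin d → Matrix (Fin n) (Fin n) (MonoidAlgebra ℂ G))
    (hm : ∀ k : ℕ, R.ψ (Matrix.trace ((mstar T * T) ^ k))
      = ∑ i, R.ψ (Matrix.trace ((mstar (b i) * b i) ^ k)))
    {f : ℝ → ℝ} (hf : ContinuousOn f (Ici 0)) : R.Lam T f = ∑ i, R.Lam (b i) f := by
  have hpoly : ∀ p : Polynomial ℝ, R.Lam T (fun s => p.eval s)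
      = ∑ i, R.Lam (b i) (fun s => p.eval s) := by
    intro p
    simp_rw [Lam_poly, ψ_trace_aeval, hm, ← Complex.re_sum, Finset.mul_sum]
    rw [Finset.sum_comm]
  refine eq_of_forall_dist_le fun ε hε => ?_
  set C : ℝ := N + d * n + 1 with hC
  have hCpos : 0 < C := by positivity
  set B : ℝ := mbd T ^ 2 + ∑ i, mbd (b i) ^ 2 with hB
  have hBT : mbd T ^ 2 ≤ B := by
    have : 0 ≤ ∑ i, mbd (b i) ^ 2 := Finset.sum_nonneg fun _ _ => sq_nonneg _
    linarith
  have hBb : ∀ i, mbd (b i) ^ 2 ≤ B := by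
    intro i
    have := Finset.single_le_sum (f := fun i => mbd (b i) ^ 2) (fun _ _ => sq_nonneg _)
      (Finset.mem_univ i)
    have := sq_nonneg (mbd T)
    linarith
  obtain ⟨p, hp⟩ := exists_polynomial_near_of_continuousOn 0 B f
    (hf.mono Icc_subset_Ici_self) (ε / C) (by positivity)
  have hpc : ContinuousOn (fun s => p.eval s) (Ici (0:ℝ)) := p.continuous.continuousOn
  have e1 := R.Lam_near T h1 hpc hf (η := ε / C)
    (fun s hs => (hp s ⟨hs.1, hs.2.trans hBT⟩).le)
  have e2 : ∀ i, |R.Lam (b i) (fun s => p.eval s) - R.Lam (b i) f| ≤ ε / C * n := fun i =>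
    R.Lam_near (b i) h1 hpc hf (fun s hs => (hp s ⟨hs.1, hs.2.trans (hBb i)⟩).le)
  have e3 : |∑ i, R.Lam (b i) (fun s => p.eval s) - ∑ i, R.Lam (b i) f| ≤ d * (ε / C * n) := by
    rw [← Finset.sum_sub_distrib]
    refine (Finset.abs_sum_le_sum_abs _ _).trans ?_
    refine (Finset.sum_le_sum fun i _ => e2 i).trans ?_
    simp
  rw [Real.dist_eq]
  rw [hpoly p] at e1
  have e4 : ε / C * N + d * (ε / C * n) ≤ ε := by
    have : ε / C * C = ε := by field_simp
    have h5 : ε / C * N + d * (ε / C * n) = ε / C * (C - 1) := by rw [hC]; ring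
    have : 0 < ε / C := by positivity
    nlinarith
  rw [abs_le] at *
  constructor <;> linarith

lemma kerDim_eq_sum (h1 : φ 1 = 1) {N d : ℕ} (T : Matrix (Fin N) (Fin N) (MonoidAlgebra ℂ G))
    (b : Fin d → Matrix (Fin n) (Fin n) (MonoidAlgebra ℂ G))
    (hm : ∀ k : ℕ, R.ψ (Matrix.trace ((mstar T * T) ^ k))
      = ∑ i, R.ψ (Matrix.trace ((mstar (b i) * b i) ^ k))) :
    R.kerDim T = ∑ i, R.kerDim (b i) := by
  have t1 := R.kerDim_tendsto T h1
  have t2 : Tendsto (fun k : ℝ => ∑ i, R.Lam (b i) (rsv k)) atTop (𝓝 (∑ i, R.kerDim (b i))) :=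
    tendsto_finset_sum _ fun i _ => R.kerDim_tendsto (b i) h1
  refine tendsto_nhds_unique (t1.congr' ?_) t2
  filter_upwards [eventually_ge_atTop 0] with k hk
  exact R.Lam_eq_sum h1 T b hm (rsv_cont hk)

lemma kerDim_mstar (h1 : φ 1 = 1) (hφ : IsGroupTrace φ) : R.kerDim (mstar a) = R.kerDim a := by
  have := R.kerDim_eq_sum h1 (mstar a) (fun _ : Fin 1 => a) (fun k => by
    rw [mstar_mstar, R.trace_pow_comm hφ]; simp)
  simpa using this

lemma kerDim_le_mul_left (h1 : φ 1 = 1) (s : Matrix (Fin n) (Fin n) (MonoidAlgebra ℂ G)) :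
    R.kerDim a ≤ R.kerDim (s * a) := by
  set S := matAct R.π s with hS
  set T := matAct R.π a with hT
  have hST : matAct R.π (s * a) = S * T := map_mul (matHom R.π) s a
  set c : ℝ := ‖star S * S‖ + 1 with hc
  have hcpos : 0 < c := by positivity
  have hle : star (S * T) * (S * T) ≤ c • (star T * T) := by
    have e1 : star (S * T) * (S * T) = star T * (star S * S) * T := by
      rw [star_mul]; simp only [mul_assoc]
    rw [e1]
    refine (CStarAlgebra.star_left_conjugate_le_norm_smul
      (hb := IsSelfAdjoint.star_mul_self S)).trans ?_
    refine smul_le_smul_of_nonneg_right (by rw [hc]; linarith) (star_mul_self_nonneg T)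
  have key : ∀ k : ℝ, 0 ≤ k → R.Lam a (rsv (k * c)) ≤ R.Lam (s * a) (rsv k) := by
    intro k hk
    rw [Lam, Lam]
    refine R.τ_mono ?_
    rw [hST, cfc_rsv (star_mul_self_nonneg _) hk,
      cfc_rsv (star_mul_self_nonneg _) (by positivity)]
    refine cfc_resolvent_anti (smul_nonneg hk (star_mul_self_nonneg _)) ?_
    rw [mul_smul]
    exact smul_le_smul_of_nonneg_left hle hk
  have t1 := (R.kerDim_tendsto a h1).comp (tendsto_id.atTop_mul_const hcpos)
  refine le_of_tendsto_of_tendsto t1 (R.kerDim_tendsto (s * a) h1) ?_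
  filter_upwards [eventually_ge_atTop 0] with k hk
  exact key k hk

lemma kerDim_unit_mul (h1 : φ 1 = 1) {s : Matrix (Fin n) (Fin n) (MonoidAlgebra ℂ G)}
    (hs : IsUnit s) : R.kerDim (s * a) = R.kerDim a := by
  refine le_antisymm ?_ (R.kerDim_le_mul_left a h1 s)
  obtain ⟨u, rfl⟩ := hs
  have := R.kerDim_le_mul_left ((u : Matrix (Fin n) (Fin n) (MonoidAlgebra ℂ G)) * a) h1
    ((u⁻¹ : (Matrix (Fin n) (Fin n) (MonoidAlgebra ℂ G))ˣ) : Matrix (Fin n) (Fin n) (MonoidAlgebra ℂ G))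
  simpa using this

lemma mstar_mul (x y : Matrix (Fin n) (Fin n) (MonoidAlgebra ℂ G)) :
    mstar (x * y) = mstar y * mstar x := by
  have hg : ∀ x y : MonoidAlgebra ℂ G, gstar (x * y) = gstar y * gstar x := by
    intro x y
    induction x using MonoidAlgebra.induction_linear with
    | zero => simp
    | add x z hx hz => simp [add_mul, mul_add, hx, hz]
    | single g c =>
      induction y using MonoidAlgebra.induction_linear with
      | zero => simp
      | add x z hx hz => simp [add_mul, mul_add, hx, hz]
      | single h d => simp [gstar_single, MonoidAlgebra.single_mul_single, mul_comm]
  ext i j : 2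
  simp [mstar, Matrix.mul_apply, hg]

lemma mstar_one : mstar (1 : Matrix (Fin n) (Fin n) (MonoidAlgebra ℂ G)) = 1 := by
  ext i j : 2
  by_cases h : j = i
  · subst h; simp [mstar, MonoidAlgebra.one_def, gstar_single]
  · simp [mstar, Matrix.one_apply, h, Ne.symm h]

lemma kerDim_mul_unit (h1 : φ 1 = 1) (hφ : IsGroupTrace φ)
    {s : Matrix (Fin n) (Fin n) (MonoidAlgebra ℂ G)}
    (hs : IsUnit s) : R.kerDim (a * s) = R.kerDim a := by
  have hs' : IsUnit (mstar s) := by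
    obtain ⟨u, rfl⟩ := hs
    refine ⟨⟨mstar ↑u, mstar ↑u⁻¹, ?_, ?_⟩, rfl⟩
    · rw [← mstar_mul, u.inv_mul, mstar_one]
    · rw [← mstar_mul, u.mul_inv, mstar_one]
  rw [← kerDim_mstar R (a * s) h1 hφ, mstar_mul, kerDim_unit_mul R _ h1 hs', kerDim_mstar R _ h1 hφ]

/-- The test functions appearing in the logarithmic estimate (in the variable `s = t²`). -/
def _root_.kfun (K ε t : ℝ) : ℝ :=
  (Real.log K - Real.log (max (min t K) ε)) / (Real.log K - Real.log ε)

lemma _root_.kfun_cont {K ε : ℝ} (hε : 0 < ε) : Continuous (kfun K ε) := by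
  unfold kfun
  refine Continuous.div_const (continuous_const.sub ?_) _
  refine Continuous.log (by fun_prop) fun t => ?_
  have : 0 < max (min t K) ε := lt_max_of_lt_right hε
  exact this.ne'

lemma _root_.kfun_mem {K ε : ℝ} (hε : 0 < ε) (hε1 : ε < 1) (hK : 1 ≤ K) (t : ℝ) :
    kfun K ε t ∈ Icc (0:ℝ) 1 := by
  have hd : 0 < Real.log K - Real.log ε := by
    have := Real.log_neg hε hε1
    have := Real.log_nonneg hK
    linarith
  have h1 : Real.log ε ≤ Real.log (max (min t K) ε) := Real.log_le_log hε (le_max_right _ _)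
  have h2 : Real.log (max (min t K) ε) ≤ Real.log K :=
    Real.log_le_log (lt_max_of_lt_right hε) (max_le (min_le_right _ _) (by linarith))
  unfold kfun
  constructor
  · exact div_nonneg (by linarith) hd.le
  · rw [div_le_one hd]; linarith

lemma _root_.kfun_zero {K ε : ℝ} (hε : 0 < ε) (hε1 : ε < 1) (hK : 1 ≤ K) :
    kfun K ε 0 = 1 := by
  have hd : 0 < Real.log K - Real.log ε := by
    have := Real.log_neg hε hε1
    have := Real.log_nonneg hK
    linarith
  unfold kfun
  rw [min_eq_left (by linarith), max_eq_right hε.le, div_self hd.ne']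

/-- The logarithmic estimate under Lück's condition. -/
lemma Lam_kfun_le (h1 : φ 1 = 1) (hL : 0 ≤ R.lnPlusQ a) {K ε : ℝ} (hK : 1 ≤ K)
    (hKa : mbd a ≤ K) (hε : 0 < ε) (hε1 : ε < 1) :
    R.Lam a (fun s => kfun K ε (Real.sqrt s)) ≤
      R.kerDim a + n * Real.log K / (- Real.log ε) := by
  have hlε : Real.log ε < 0 := Real.log_neg hε hε1
  have hlK : 0 ≤ Real.log K := Real.log_nonneg hK
  have hd : 0 < Real.log K - Real.log ε := by linarith
  rw [← sub_le_iff_le_add]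
  have hck : ContinuousOn (fun s => kfun K ε (Real.sqrt s)) (Ici 0) :=
    ((kfun_cont hε).comp Real.continuous_sqrt).continuousOn
  refine R.le_kerDim a fun f hf hf1 hf0 => ?_
  have hf' : ContinuousOn (fun t => f (t ^ 2)) (Ici (0:ℝ)) :=
    hf.comp (by fun_prop) fun x _ => sq_nonneg x
  have hcl : Continuous (fun t : ℝ => Real.log (max t ε)) :=
    Continuous.log (by fun_prop) fun t => (lt_max_of_lt_right hε : 0 < max t ε).ne'
  have hg : (fun t => Real.log (max t ε) + (- Real.log ε) * f (t ^ 2)) ∈ lnPlusMajorants := by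
    refine ⟨hcl.continuousOn.add (continuousOn_const.mul hf'), fun t ht => ?_⟩
    rcases eq_or_lt_of_le (show (0:ℝ) ≤ t from ht) with h | h
    · subst h
      have : max 0 ε = ε := max_eq_right hε.le
      simp [hf0, this]
    · have e1 : Real.log t ≤ Real.log (max t ε) := Real.log_le_log h (le_max_left _ _)
      have e2 := (hf1 (t ^ 2) (sq_nonneg t)).1
      have : 0 ≤ (- Real.log ε) * f (t ^ 2) := mul_nonneg (by linarith) e2
      simp only
      linarith
  have hQ := hL.trans (iInf₂_le _ hg)
  rw [cfc_cfcAbs _ hg.1] at hQ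
  have hQ' : 0 ≤ R.Lam a (fun s => Real.log (max (Real.sqrt s) ε)
      + (- Real.log ε) * f (Real.sqrt s ^ 2)) := by
    exact_mod_cast hQ
  have hle : R.Lam a (fun s => Real.log (max (Real.sqrt s) ε)
      + (- Real.log ε) * f (Real.sqrt s ^ 2)) ≤
      R.Lam a (fun s => (Real.log K + (-(Real.log K - Real.log ε)) * kfun K ε (Real.sqrt s)) +
        (- Real.log ε) * f s) := by
    refine R.Lam_mono a ?_ ?_ ?_
    · refine (hcl.comp Real.continuous_sqrt).continuousOn.add (continuousOn_const.mul ?_)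
      exact hf.comp (by fun_prop) fun x _ => (show (0:ℝ) ≤ Real.sqrt x ^ 2 from sq_nonneg _)
    · exact (continuousOn_const.add (continuousOn_const.mul hck)).add (continuousOn_const.mul hf)
    · intro s hs
      have hsK : Real.sqrt s ≤ K := by
        refine Real.sqrt_le_iff.2 ⟨by linarith, hs.2.trans ?_⟩
        exact pow_le_pow_left₀ (mbd_nonneg a) hKa 2
      rw [Real.sq_sqrt hs.1]
      unfold kfun
      rw [min_eq_left hsK]
      refine le_of_eq ?_
      field_simp
      ring
  rw [R.Lam_add a
      (f := fun s => Real.log K + (-(Real.log K - Real.log ε)) * kfun K ε (Real.sqrt s))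
      (g := fun s => (- Real.log ε) * f s)
      (continuousOn_const.add (continuousOn_const.mul hck)) (continuousOn_const.mul hf),
    R.Lam_add a (f := fun s => Real.log K)
      (g := fun s => (-(Real.log K - Real.log ε)) * kfun K ε (Real.sqrt s))
      continuousOn_const (continuousOn_const.mul hck), R.Lam_mul a _ hck,
    R.Lam_mul a _ hf, R.Lam_const a h1] at hle
  have hkn : 0 ≤ R.Lam a (fun s => kfun K ε (Real.sqrt s)) :=
    R.Lam_nonneg a hck fun s _ => (kfun_mem hε hε1 hK _).1
  rw [sub_le_iff_le_add, ← sub_le_iff_le_add', le_div_iff₀ (by linarith)]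
  nlinarith [mul_nonneg hlK hkn]

end GNSRep

end Compare

section GNSExist

set_option linter.all false

open UniformSpace

variable {G : Type} [Group G]

lemma gstar_mul' (x y : MonoidAlgebra ℂ G) : gstar (x * y) = gstar y * gstar x := by
  induction x using MonoidAlgebra.induction_linear with
  | zero => simp
  | add x z hx hz => simp [add_mul, mul_add, hx, hz]
  | single g c =>
    induction y using MonoidAlgebra.induction_linear with
    | zero => simp
    | add x z hx hz => simp [add_mul, mul_add, hx, hz]
    | single h d => simp [gstar_single, MonoidAlgebra.single_mul_single, mul_comm]

lemma gstar_smul (c : ℂ) (x : MonoidAlgebra ℂ G) :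
    gstar (c • x) = starRingEnd ℂ c • gstar x := by
  induction x using MonoidAlgebra.induction_linear with
  | zero => simp
  | add x z hx hz => simp [hx, hz]
  | single g d => simp [gstar_single]

/-- linear extension of `φ` -/
def linExt (φ : G → ℂ) : MonoidAlgebra ℂ G →ₗ[ℂ] ℂ :=
  (Finsupp.linearCombination ℂ φ) ∘ₗ (MonoidAlgebra.coeffLinearEquiv ℂ).toLinearMap

lemma linExt_single (φ : G → ℂ) (g : G) (c : ℂ) :
    linExt φ (MonoidAlgebra.single g c) = c * φ g := by
  simp [linExt, MonoidAlgebra.coeffLinearEquiv]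

lemma IsPosType.inv {φ : G → ℂ} (h : IsPosType φ) (g : G) :
    φ g⁻¹ = starRingEnd ℂ (φ g) := by
  have := (h 2 ![g, 1]).1
  have := congrFun (congrFun this 0) 1
  simp [Matrix.conjTranspose_apply] at this
  rw [← this]

lemma linExt_gstar {φ : G → ℂ} (h : IsPosType φ) (x : MonoidAlgebra ℂ G) :
    linExt φ (gstar x) = starRingEnd ℂ (linExt φ x) := by
  induction x using MonoidAlgebra.induction_linear with
  | zero => simp
  | add x z hx hz => simp [hx, hz]
  | single g d => simp [gstar_single, linExt_single, h.inv]

lemma linExt_nonneg {φ : G → ℂ} (h : IsPosType φ) (x : MonoidAlgebra ℂ G) :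
    0 ≤ linExt φ (gstar x * x) := by
  obtain ⟨m, g, c, rfl⟩ : ∃ (m : ℕ) (g : Fin m → G) (c : Fin m → ℂ),
      x = ∑ i, MonoidAlgebra.single (g i) (c i) := by
    refine ⟨_, fun i => (x.coeff.support.equivFin.symm i : G),
      fun i => x.coeff (x.coeff.support.equivFin.symm i), ?_⟩
    conv_lhs => rw [← MonoidAlgebra.sum_coeff_single x, Finsupp.sum]
    rw [Equiv.sum_comp x.coeff.support.equivFin.symm
      (fun i => MonoidAlgebra.single (i : G) (x.coeff i)), Finset.sum_coe_sort x.coeff.support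
      (fun i => MonoidAlgebra.single (i : G) (x.coeff i))]
  have := (h m g).dotProduct_mulVec_nonneg c
  convert this using 1
  simp only [map_sum, gstar_single, Finset.sum_mul, Finset.mul_sum, linExt_single,
    MonoidAlgebra.single_mul_single, dotProduct, Matrix.mulVec, Matrix.of_apply]
  rw [Finset.sum_comm]
  refine Finset.sum_congr rfl fun i _ => Finset.sum_congr rfl fun j _ => ?_
  simp
  ring

/-- the pre-Hilbert space -/
def PreH (φ : G → ℂ) (h : IsPosType φ) : Type := MonoidAlgebra ℂ G

variable (φ : G → ℂ) (h : IsPosType φ)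

instance : AddCommGroup (PreH φ h) := inferInstanceAs (AddCommGroup (MonoidAlgebra ℂ G))
instance : Module ℂ (PreH φ h) := inferInstanceAs (Module ℂ (MonoidAlgebra ℂ G))

/-- identification -/
def toPreH : MonoidAlgebra ℂ G ≃ₗ[ℂ] PreH φ h := LinearEquiv.refl ℂ _

/-- the pre-inner product -/
abbrev preHCore : PreInnerProductSpace.Core ℂ (PreH φ h) where
  inner x y := linExt φ (gstar ((toPreH φ h).symm x) * (toPreH φ h).symm y)
  conj_inner_symm x y := by
    rw [← linExt_gstar h, gstar_mul', gstar_gstar]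
  re_inner_nonneg x := (RCLike.nonneg_iff.mp (linExt_nonneg h _)).1
  add_left x y z := by simp [add_mul]
  smul_left x y r := by simp [gstar_smul]

instance : SeminormedAddCommGroup (PreH φ h) :=
  InnerProductSpace.Core.toSeminormedAddCommGroup (c := preHCore φ h)
instance : InnerProductSpace ℂ (PreH φ h) := InnerProductSpace.ofCore (preHCore φ h)

lemma preH_inner (x y : PreH φ h) : inner ℂ x y =
    linExt φ (gstar ((toPreH φ h).symm x) * (toPreH φ h).symm y) := rfl

/-- left translation -/
def lmulLin (g : G) : PreH φ h →ₗ[ℂ] PreH φ h :=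
  (toPreH φ h).toLinearMap ∘ₗ LinearMap.mulLeft ℂ (MonoidAlgebra.of ℂ G g) ∘ₗ
    (toPreH φ h).symm.toLinearMap

lemma lmulLin_apply (g : G) (x : PreH φ h) : lmulLin φ h g x =
    toPreH φ h (MonoidAlgebra.of ℂ G g * (toPreH φ h).symm x) := rfl

lemma lmulLin_adj (g : G) (x y : PreH φ h) :
    inner ℂ (lmulLin φ h g⁻¹ x) y = inner ℂ x (lmulLin φ h g y) := by
  simp only [preH_inner, lmulLin_apply, LinearEquiv.symm_apply_apply, gstar_mul']
  rw [mul_assoc]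
  congr 2
  simp [gstar_single]

lemma lmulLin_lmulLin (g k : G) (x : PreH φ h) :
    lmulLin φ h g (lmulLin φ h k x) = lmulLin φ h (g * k) x := by
  simp only [lmulLin_apply, LinearEquiv.symm_apply_apply, map_mul, mul_assoc]

lemma lmulLin_one (x : PreH φ h) : lmulLin φ h 1 x = x := by
  simp only [lmulLin_apply, map_one, one_mul, LinearEquiv.apply_symm_apply]

lemma lmulLin_norm (g : G) (x : PreH φ h) : ‖lmulLin φ h g x‖ = ‖x‖ := by
  have : (inner ℂ (lmulLin φ h g x) (lmulLin φ h g x) : ℂ) = inner ℂ x x := by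
    rw [← lmulLin_adj, lmulLin_lmulLin, inv_mul_cancel, lmulLin_one]
  rw [@norm_eq_sqrt_re_inner ℂ, this, ← @norm_eq_sqrt_re_inner ℂ]

/-- left translation, continuous -/
def lmulC (g : G) : PreH φ h →L[ℂ] PreH φ h :=
  (lmulLin φ h g).mkContinuous 1 fun x => by rw [lmulLin_norm, one_mul]

lemma lmulC_apply (g : G) (x : PreH φ h) : lmulC φ h g x = lmulLin φ h g x := rfl

/-- the representation on the completion -/
def lmulHom : G →* (Completion (PreH φ h) →L[ℂ] Completion (PreH φ h)) where
  toFun g := (lmulC φ h g).completion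
  map_one' := by
    ext c
    induction c using Completion.induction_on with
    | hp => apply isClosed_eq <;> fun_prop
    | ih c => simp [lmulC_apply, lmulLin_one]
  map_mul' g k := by
    ext c
    induction c using Completion.induction_on with
    | hp => apply isClosed_eq <;> fun_prop
    | ih c => simp [lmulC_apply, lmulLin_lmulLin]

lemma lmulHom_coe (g : G) (x : PreH φ h) :
    lmulHom φ h g (x : Completion (PreH φ h)) = ((lmulLin φ h g x : PreH φ h) :
      Completion (PreH φ h)) := by
  simp [lmulHom, lmulC_apply]

lemma lift_lmulHom (x : MonoidAlgebra ℂ G) (y : PreH φ h) :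
    MonoidAlgebra.lift ℂ _ G (lmulHom φ h) x (y : Completion (PreH φ h)) =
      ((toPreH φ h (x * (toPreH φ h).symm y) : PreH φ h) : Completion (PreH φ h)) := by
  induction x using MonoidAlgebra.induction_linear with
  | zero => simpa using (Completion.coe_zero (α := PreH φ h)).symm
  | add x z hx hz =>
    simp only [map_add, add_mul, ContinuousLinearMap.add_apply, hx, hz]
    exact (Completion.coe_add _ _).symm
  | single g c =>
    rw [MonoidAlgebra.lift_single, ContinuousLinearMap.smul_apply, lmulHom_coe, ← Completion.coe_smul,
      lmulLin_apply, ← map_smul, ← smul_mul_assoc]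
    simp

theorem exists_GNSRep (h : IsPosType φ) : Nonempty (GNSRep G φ) := by
  refine ⟨{ H := Completion (PreH φ h), π := MonoidAlgebra.lift ℂ _ G (lmulHom φ h),
            ξ := ((toPreH φ h 1 : PreH φ h) : Completion (PreH φ h)), star_of := ?_,
            inner_eq := ?_, cyclic := ?_ }⟩
  · intro g
    rw [MonoidAlgebra.lift_of, MonoidAlgebra.lift_of]
    symm
    refine (ContinuousLinearMap.eq_adjoint_iff _ _).mpr ?_
    intro x y
    induction x, y using Completion.induction_on₂ with
    | hp => apply isClosed_eq <;> fun_prop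
    | ih x y => rw [lmulHom_coe, lmulHom_coe, Completion.inner_coe, Completion.inner_coe, lmulLin_adj]
  · intro g
    rw [lift_lmulHom, Completion.inner_coe, preH_inner]
    simp [MonoidAlgebra.one_def, gstar_single, MonoidAlgebra.single_mul_single, linExt_single]
  · have : (fun x : MonoidAlgebra ℂ G => MonoidAlgebra.lift ℂ _ G (lmulHom φ h) x
        ((toPreH φ h 1 : PreH φ h) : Completion (PreH φ h))) =
        (fun z : PreH φ h => (z : Completion (PreH φ h))) ∘ toPreH φ h := by
      ext x
      rw [lift_lmulHom]
      simp
    rw [this, (toPreH φ h).surjective.range_comp]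
    exact Completion.denseRange_coe

end GNSExist

section Cont

set_option linter.all false

open Set

variable {G : Type} [Group G]

/-- The set of tracial states satisfying Lück's condition. -/
def LTr (G : Type) [Group G] : Set (G → ℂ) := {φ | IsGroupTrace φ ∧ φ 1 = 1 ∧ SatisfiesLueck φ}

variable (R : ∀ φ : LTr G, GNSRep G φ.1) {n : ℕ} (a : Matrix (Fin n) (Fin n) (MonoidAlgebra ℂ G))

lemma ψ_cont (x : MonoidAlgebra ℂ G) : Continuous fun φ : LTr G => (R φ).ψ x := by
  simp_rw [GNSRep.ψ_eq, Finsupp.sum]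
  refine continuous_finset_sum _ fun g _ => continuous_const.mul ?_
  exact (continuous_apply g).comp continuous_subtype_val

lemma Lam_cont {f : ℝ → ℝ} (hf : ContinuousOn f (Ici 0)) :
    Continuous fun φ : LTr G => (R φ).Lam a f := by
  refine continuous_of_uniform_approx_of_continuous fun u hu => ?_
  obtain ⟨ε, hε, hεu⟩ := Metric.mem_uniformity_dist.1 hu
  obtain ⟨p, hp⟩ := exists_polynomial_near_of_continuousOn 0 (mbd a ^ 2) f
    (hf.mono Icc_subset_Ici_self) (ε / (n + 1)) (by positivity)
  refine ⟨fun φ => (R φ).Lam a (fun s => p.eval s), ?_, fun φ => hεu ?_⟩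
  · simp_rw [GNSRep.Lam_poly]
    exact Complex.continuous_re.comp (ψ_cont R _)
  · have e1 := (R φ).Lam_near a φ.2.2.1 (f := fun s => p.eval s) p.continuous.continuousOn hf
      (η := ε / (n + 1)) (fun s hs => (hp s hs).le)
    rw [dist_comm, Real.dist_eq]
    refine e1.trans_lt ?_
    rw [div_mul_eq_mul_div, div_lt_iff₀ (by positivity)]
    nlinarith

lemma kerDim_usc : UpperSemicontinuous fun φ : LTr G => (R φ).kerDim a := by
  intro φ y hy
  obtain ⟨k, hk, hk0⟩ := ((((R φ).kerDim_tendsto a φ.2.2.1).eventually_lt_const hy).and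
    (eventually_ge_atTop (0:ℝ))).exists
  filter_upwards [(Lam_cont R a (rsv_cont hk0)).continuousAt.eventually_lt_const hk] with φ' h
  exact ((R φ').kerDim_le a (rsv_cont hk0) (rsv_mem hk0) (by simp [rsv])).trans_lt h

lemma kerDim_int_cont (hn : 0 < n)
    (ha : ∀ (i j : Fin n) (g : G), ∃ m : ℤ, (a i j).coeff g = (m : ℂ)) :
    Continuous fun φ : LTr G => (R φ).kerDim a := by
  refine continuous_of_uniform_approx_of_continuous fun u hu => ?_
  obtain ⟨ε, hε, hεu⟩ := Metric.mem_uniformity_dist.1 hu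
  set K := max 1 (mbd a) with hK
  have hK1 : 1 ≤ K := le_max_left _ _
  have hKa : mbd a ≤ K := le_max_right _ _
  have hlK := Real.log_nonneg hK1
  set C : ℝ := (n * Real.log K + 1) / ε with hC
  have hCpos : 0 < C := by positivity
  set δ := Real.exp (-C) with hδ
  have hδ0 : 0 < δ := Real.exp_pos _
  have hδ1 : δ < 1 := by rw [hδ, Real.exp_lt_one_iff]; linarith
  have hck : ContinuousOn (fun s => kfun K δ (Real.sqrt s)) (Ici 0) :=
    ((kfun_cont hδ0).comp Real.continuous_sqrt).continuousOn
  refine ⟨fun φ => (R φ).Lam a (fun s => kfun K δ (Real.sqrt s)), Lam_cont R a hck, fun φ => hεu ?_⟩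
  have e1 := (R φ).Lam_kfun_le a φ.2.2.1 (φ.2.2.2 n hn a ha (R φ)) hK1 hKa hδ0 hδ1
  have e2 := (R φ).kerDim_le a hck (fun t _ => kfun_mem hδ0 hδ1 hK1 _)
    (by rw [Real.sqrt_zero, kfun_zero hδ0 hδ1 hK1])
  have e3 : n * Real.log K / (- Real.log δ) < ε := by
    rw [hδ, Real.log_exp, neg_neg, div_lt_iff₀ hCpos, hC, mul_div_cancel₀ _ hε.ne']
    linarith
  rw [Real.dist_eq, abs_lt]
  constructor <;> linarith

lemma cont_of_sum {X : Type*} [TopologicalSpace X] {d : ℕ} (f : Fin d → X → ℝ)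
    (hf : ∀ i, UpperSemicontinuous (f i)) (hs : Continuous fun x => ∑ i, f i x) (i : Fin d) :
    Continuous (f i) := by
  rw [continuous_iff_lower_upperSemicontinuous]
  refine ⟨?_, hf i⟩
  have h1 : UpperSemicontinuous fun x => ∑ j ∈ Finset.univ.erase i, f j x :=
    upperSemicontinuous_sum fun j _ => hf j
  have h2 : ∀ x, f i x = ∑ j, f j x - ∑ j ∈ Finset.univ.erase i, f j x := fun x => by
    rw [← Finset.add_sum_erase _ _ (Finset.mem_univ i)]; ring
  intro x y hy
  set δ := (f i x - y) / 2 with hδ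
  have hδ0 : 0 < δ := by rw [hδ]; linarith
  filter_upwards [hs.continuousAt.eventually_const_lt (show ∑ j, f j x - δ < ∑ j, f j x by linarith),
    h1 x (∑ j ∈ Finset.univ.erase i, f j x + δ) (by linarith)] with z hz1 hz2
  have := h2 x
  have := h2 z
  linarith

end Cont

section NT

set_option linter.all false

open Polynomial

lemma exists_common_generator (F : Finset ℂ) (hF : ∀ c ∈ F, IsAlgebraic ℚ c) :
    ∃ θ : ℂ, IsIntegral ℤ θ ∧ ∃ m : ℤ, m ≠ 0 ∧ ∀ c ∈ F, ∃ q : ℤ[X], (m : ℂ) * c = aeval θ q := by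
  classical
  let L := IntermediateField.adjoin ℚ (F : Set ℂ)
  haveI : FiniteDimensional ℚ L :=
    IntermediateField.finiteDimensional_adjoin fun x hx => (hF x hx).isIntegral
  obtain ⟨α, hα⟩ := Field.exists_primitive_element ℚ L
  have hαa : IsAlgebraic ℚ α := Algebra.IsAlgebraic.isAlgebraic α
  have h1 : ∀ c ∈ F, ∃ p : ℚ[X], c = aeval (α : ℂ) p := by
    intro c hc
    have hcL : c ∈ L := IntermediateField.subset_adjoin ℚ _ hc
    have : (⟨c, hcL⟩ : L) ∈ (IntermediateField.adjoin ℚ {α}).toSubalgebra := by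
      rw [hα]; trivial
    rw [IntermediateField.adjoin_simple_toSubalgebra_of_isAlgebraic hαa,
      Algebra.adjoin_singleton_eq_range_aeval] at this
    obtain ⟨p, hp⟩ := this
    refine ⟨p, ?_⟩
    have := congrArg L.val hp
    simp only [RingHom.coe_coe, AlgHom.toRingHom_eq_coe] at this
    rw [← aeval_algHom_apply] at this
    exact this.symm
  have hαz : IsAlgebraic ℤ (α : ℂ) := by
    have h2 : IsAlgebraic ℚ (α : ℂ) := (isAlgebraic_algebraMap_iff L.val.injective (a := α)).2 hαa
    exact (IsFractionRing.isAlgebraic_iff ℤ ℚ ℂ).2 h2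
  obtain ⟨y, hy, hyint⟩ := hαz.exists_integral_multiple
  set θ : ℂ := y • (α : ℂ) with hθ
  have h2 : ∀ c ∈ F, ∃ mq : ℤ × ℤ[X], mq.1 ≠ 0 ∧ (mq.1 : ℂ) * c = aeval θ mq.2 := by
    intro c hc
    obtain ⟨p, hp⟩ := h1 c hc
    set p' : ℚ[X] := p.comp (C ((y : ℚ)⁻¹) * X) with hp'
    have hp2 : c = aeval θ p' := by
      rw [hp, hp', aeval_comp]
      congr 1
      have : (y : ℂ) ≠ 0 := by exact_mod_cast hy
      simp [hθ, this]
    obtain ⟨b, hb⟩ := IsLocalization.integerNormalization_map_to_map (nonZeroDivisors ℤ) p'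
    refine ⟨((b : ℤ), IsLocalization.integerNormalization (nonZeroDivisors ℤ) p'),
      nonZeroDivisors.ne_zero b.2, ?_⟩
    have := congrArg (aeval θ) hb
    rw [aeval_map_algebraMap] at this
    simp only
    rw [this, hp2]
    simp
  choose! mq hm0 hmq using h2
  refine ⟨θ, hyint, ∏ c ∈ F, (mq c).1, Finset.prod_ne_zero_iff.2 hm0, fun c hc => ?_⟩
  refine ⟨C (∏ x ∈ F.erase c, (mq x).1) * (mq c).2, ?_⟩
  rw [← Finset.prod_erase_mul F _ hc]
  simp only [map_mul, ← hmq c hc]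
  push_cast
  simp
  ring

lemma exists_roots {θ : ℂ} (hθ : IsIntegral ℤ θ) :
    ∃ (d : ℕ) (P : ℤ[X]) (r : Fin d → ℂ) (i₀ : Fin d), P.Monic ∧ P.natDegree = d ∧ P ≠ 1 ∧
      Function.Injective r ∧ (∀ i, aeval (r i) P = 0) ∧ r i₀ = θ := by
  classical
  set P := minpoly ℤ θ with hP
  have hPm : P.Monic := minpoly.monic hθ
  have hmap : minpoly ℚ θ = P.map (algebraMap ℤ ℚ) :=
    minpoly.isIntegrallyClosed_eq_field_fractions' ℚ hθ
  have hθq : IsIntegral ℚ θ := hθ.tower_top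
  have hsep : (minpoly ℚ θ).Separable := (minpoly.irreducible hθq).separable
  have hcard := card_rootSet_eq_natDegree (K := ℂ) hsep (IsAlgClosed.splits _)
  have hd : (minpoly ℚ θ).natDegree = P.natDegree := by
    rw [hmap, hPm.natDegree_map]
  rw [hd] at hcard
  have e := Fintype.equivFinOfCardEq hcard
  have hroot : ∀ z : ℂ, z ∈ (minpoly ℚ θ).rootSet ℂ ↔ aeval z P = 0 := by
    intro z
    rw [mem_rootSet, hmap, aeval_map_algebraMap]
    simp [hPm.map _ |>.ne_zero]
  refine ⟨P.natDegree, P, fun i => (e.symm i : ℂ), e ⟨θ, (hroot θ).2 (minpoly.aeval ℤ θ)⟩, hPm, rfl,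
    minpoly.ne_one ℤ θ, ?_, ?_, ?_⟩
  · exact Subtype.val_injective.comp e.symm.injective
  · intro i
    exact (hroot _).1 (e.symm i).2
  · simp

lemma eval_modByMonic_sum {P : ℤ[X]} (hP : P.Monic) (hP1 : P ≠ 1) {d : ℕ} (hd : P.natDegree = d)
    {z : ℂ} (hz : aeval z P = 0) (p : ℤ[X]) :
    ∑ k : Fin d, z ^ (k : ℕ) * (((p %ₘ P).coeff k : ℤ) : ℂ) = aeval z p := by
  have h1 : aeval z p = aeval z (p %ₘ P) := by
    conv_lhs => rw [← modByMonic_add_div p P]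
    simp [hz]
  have h2 : (p %ₘ P).natDegree < d := hd ▸ natDegree_modByMonic_lt p hP hP1
  rw [h1, aeval_def, eval₂_eq_sum_range' _ h2, Finset.sum_range]
  refine Finset.sum_congr rfl fun k _ => ?_
  simp [mul_comm]

end NT

section Final

set_option linter.all false

open Polynomial Matrix

variable {G : Type} [Group G]

/-- amplification of a scalar matrix -/
def amp (n : ℕ) {d : ℕ} (M : Matrix (Fin d) (Fin d) ℂ) :
    Matrix (Fin n × Fin d) (Fin n × Fin d) (MonoidAlgebra ℂ G) :=
  (Matrix.kroneckerMap (· * ·) (1 : Matrix (Fin n) (Fin n) ℂ) M).map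
    (algebraMap ℂ (MonoidAlgebra ℂ G))

lemma amp_mul (n : ℕ) {d : ℕ} (M N : Matrix (Fin d) (Fin d) ℂ) :
    (amp n (M * N) : Matrix (Fin n × Fin d) (Fin n × Fin d) (MonoidAlgebra ℂ G))
      = amp n M * amp n N := by
  unfold amp
  rw [← Matrix.map_mul, ← Matrix.mul_kronecker_mul, one_mul]

lemma amp_one (n d : ℕ) :
    (amp n (1 : Matrix (Fin d) (Fin d) ℂ) :
      Matrix (Fin n × Fin d) (Fin n × Fin d) (MonoidAlgebra ℂ G)) = 1 := by
  unfold amp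
  rw [Matrix.one_kronecker_one, Matrix.map_one _ (map_zero _) (map_one _)]

lemma amp_isUnit (n : ℕ) {d : ℕ} {M : Matrix (Fin d) (Fin d) ℂ} (h : IsUnit M) :
    IsUnit (amp n M : Matrix (Fin n × Fin d) (Fin n × Fin d) (MonoidAlgebra ℂ G)) := by
  obtain ⟨u, rfl⟩ := h
  refine ⟨⟨amp n ↑u, amp n ↑u⁻¹, ?_, ?_⟩, rfl⟩
  · rw [← amp_mul, u.mul_inv, amp_one]
  · rw [← amp_mul, u.inv_mul, amp_one]

lemma trace_reindex' {ι κ : Type*} [Fintype ι] [Fintype κ] [DecidableEq ι] [DecidableEq κ]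
    (e : ι ≃ κ) (M : Matrix ι ι (MonoidAlgebra ℂ G)) :
    Matrix.trace (Matrix.reindexAlgEquiv ℂ (MonoidAlgebra ℂ G) e M) = Matrix.trace M := by
  simp only [Matrix.trace, Matrix.diag, Matrix.reindexAlgEquiv_apply, Matrix.reindex_apply,
    Matrix.submatrix_apply]
  exact Equiv.sum_comp e.symm (fun i => M i i)

lemma kerDim_blockDiagonal {φ : G → ℂ} (R : GNSRep G φ) (h1 : φ 1 = 1) {n d : ℕ}
    (b : Fin d → Matrix (Fin n) (Fin n) (MonoidAlgebra ℂ G)) :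
    R.kerDim (Matrix.reindexAlgEquiv ℂ (MonoidAlgebra ℂ G) finProdFinEquiv
      (Matrix.blockDiagonal b)) = ∑ i, R.kerDim (b i) := by
  refine R.kerDim_eq_sum h1 _ b fun k => ?_
  have e1 : mstar (Matrix.reindexAlgEquiv ℂ (MonoidAlgebra ℂ G) finProdFinEquiv
      (Matrix.blockDiagonal b)) = Matrix.reindexAlgEquiv ℂ (MonoidAlgebra ℂ G) finProdFinEquiv
      (Matrix.blockDiagonal fun i => mstar (b i)) := by
    ext i j : 2
    simp only [mstar, Matrix.reindexAlgEquiv_apply, Matrix.reindex_apply, Matrix.transpose_apply,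
      Matrix.map_apply, Matrix.submatrix_apply, Matrix.blockDiagonal_apply]
    split_ifs with h h' h'
    · rw [h]
    · exact absurd h.symm h'
    · exact absurd h'.symm h
    · simp
  rw [e1, ← map_mul, ← Matrix.blockDiagonal_mul, ← map_pow, ← Matrix.blockDiagonal_pow,
    trace_reindex', Matrix.trace_blockDiagonal, GNSRep.ψ_sum]
  rfl

lemma main_alg {φ : G → ℂ} (R : GNSRep G φ) (hφ : IsGroupTrace φ) (h1 : φ 1 = 1) {n d : ℕ}
    (b : Fin d → Matrix (Fin n) (Fin n) (MonoidAlgebra ℂ G))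
    (T : Matrix (Fin n × Fin d) (Fin n × Fin d) (MonoidAlgebra ℂ G))
    {V : Matrix (Fin d) (Fin d) ℂ} (hV : IsUnit V)
    (hT : amp n V * T = Matrix.blockDiagonal b * amp n V) :
    R.kerDim (Matrix.reindexAlgEquiv ℂ (MonoidAlgebra ℂ G) finProdFinEquiv T)
      = ∑ i, R.kerDim (b i) := by
  set E := Matrix.reindexAlgEquiv ℂ (MonoidAlgebra ℂ G) (finProdFinEquiv (m := n) (n := d)) with hE
  have hu : IsUnit (E (amp n V)) := (amp_isUnit n hV).map E
  rw [← kerDim_blockDiagonal R h1 b, ← R.kerDim_unit_mul (E T) h1 hu, ← map_mul, hT, map_mul,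
    R.kerDim_mul_unit _ h1 hφ hu]

/-- the conjugates of the matrix with coefficients `q` -/
def bmat {n : ℕ} (S : Finset G) (q : Fin n → Fin n → G → ℤ[X]) (z : ℂ) :
    Matrix (Fin n) (Fin n) (MonoidAlgebra ℂ G) :=
  Matrix.of fun u v => ∑ g ∈ S, MonoidAlgebra.single g (aeval z (q u v g))

/-- the integer matrix -/
def Tmat {n : ℕ} (d : ℕ) (P : ℤ[X]) (S : Finset G) (q : Fin n → Fin n → G → ℤ[X]) :
    Matrix (Fin n × Fin d) (Fin n × Fin d) (MonoidAlgebra ℂ G) :=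
  Matrix.of fun x y => ∑ g ∈ S, MonoidAlgebra.single g
    ((((X ^ (y.2 : ℕ) * q x.1 y.1 g) %ₘ P).coeff x.2 : ℤ) : ℂ)

lemma Tmat_int {n : ℕ} (d : ℕ) (P : ℤ[X]) (S : Finset G) (q : Fin n → Fin n → G → ℤ[X])
    (x y : Fin n × Fin d) (g : G) : ∃ m : ℤ, (Tmat d P S q x y).coeff g = (m : ℂ) := by
  classical
  refine ⟨∑ h ∈ S, if h = g then ((X ^ (y.2 : ℕ) * q x.1 y.1 h) %ₘ P).coeff x.2 else 0, ?_⟩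
  simp only [Tmat, Matrix.of_apply, MonoidAlgebra.coeff_sum, Finsupp.finset_sum_apply,
    MonoidAlgebra.coeff_single, Finsupp.single_apply]
  push_cast
  rfl

lemma amp_Tmat {n d : ℕ} {P : ℤ[X]} (hP : P.Monic) (hP1 : P ≠ 1) (hd : P.natDegree = d)
    (S : Finset G) (q : Fin n → Fin n → G → ℤ[X]) (r : Fin d → ℂ) (hr : ∀ i, aeval (r i) P = 0) :
    amp n (Matrix.vandermonde r) * Tmat d P S q =
      Matrix.blockDiagonal (fun i => bmat S q (r i)) * amp n (Matrix.vandermonde r) := by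
  ext ⟨u, i⟩ ⟨v, j⟩ : 2
  rw [Matrix.mul_apply, Matrix.mul_apply, Fintype.sum_prod_type, Fintype.sum_prod_type]
  have e1 : ∀ (x : Fin n) (k : Fin d),
      (amp n (Matrix.vandermonde r) (u, i) (x, k) : MonoidAlgebra ℂ G)
        = if u = x then MonoidAlgebra.single 1 (r i ^ (k : ℕ)) else 0 := by
    intro x k
    simp only [amp, Matrix.map_apply, Matrix.kroneckerMap_apply, Matrix.vandermonde_apply,
      Matrix.one_apply]
    split_ifs <;> simp
  have e2 : ∀ (x : Fin n) (k : Fin d),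
      (amp n (Matrix.vandermonde r) (x, k) (v, j) : MonoidAlgebra ℂ G)
        = if x = v then MonoidAlgebra.single 1 (r k ^ (j : ℕ)) else 0 := by
    intro x k
    simp only [amp, Matrix.map_apply, Matrix.kroneckerMap_apply, Matrix.vandermonde_apply,
      Matrix.one_apply]
    split_ifs <;> simp
  simp only [e1, e2, Matrix.blockDiagonal_apply, ite_mul, mul_ite, zero_mul, mul_zero]
  rw [Finset.sum_eq_single u (fun x _ hx => by simp [Ne.symm hx]) (by simp),
    Finset.sum_eq_single v (fun x _ hx => by simp [hx]) (by simp)]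
  simp only [if_true, Finset.sum_ite_eq, Finset.mem_univ, Tmat, bmat, Matrix.of_apply,
    Finset.mul_sum, Finset.sum_mul, MonoidAlgebra.single_mul_single, one_mul, mul_one]
  rw [Finset.sum_comm]
  refine congrArg MonoidAlgebra.coeff (Finset.sum_congr rfl fun g _ => ?_)
  have := eval_modByMonic_sum hP hP1 hd (hr i) (X ^ (j : ℕ) * q u v g)
  have hs : ∀ c : Fin d → ℂ, ∑ k, MonoidAlgebra.single g (c k)
      = MonoidAlgebra.single g (∑ k, c k) := fun c =>
    (map_sum (MonoidAlgebra.singleAddHom g : ℂ →+ MonoidAlgebra ℂ G) c Finset.univ).symm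
  rw [hs, this]
  simp [mul_comm]

theorem final_aux (n : ℕ) (hn : 0 < n)
    (a : Matrix (Fin n) (Fin n) (MonoidAlgebra ℂ G))
    (halg : ∀ (i j : Fin n) (g : G), IsAlgebraic ℚ ((a i j).coeff g))
    (R : ∀ φ : LTr G, GNSRep G φ.1) :
    Continuous fun φ : LTr G => (R φ).kerDim a := by
  classical
  set S : Finset G := Finset.univ.biUnion fun ij : Fin n × Fin n => (a ij.1 ij.2).coeff.support
    with hS
  set F : Finset ℂ := Finset.univ.biUnion fun ij : Fin n × Fin n => S.image (a ij.1 ij.2).coeff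
    with hF
  obtain ⟨θ, hθ, m, hm, hq⟩ := exists_common_generator F (by
    intro c hc
    simp only [hF, Finset.mem_biUnion, Finset.mem_image] at hc
    obtain ⟨ij, -, g, -, rfl⟩ := hc
    exact halg _ _ _)
  have hq' : ∀ (i j : Fin n) (g : G), ∃ p : ℤ[X], g ∈ S → (m : ℂ) * (a i j).coeff g = aeval θ p := by
    intro i j g
    by_cases hg : g ∈ S
    · obtain ⟨p, hp⟩ := hq ((a i j).coeff g)
        (Finset.mem_biUnion.2 ⟨(i, j), Finset.mem_univ _, Finset.mem_image_of_mem _ hg⟩)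
      exact ⟨p, fun _ => hp⟩
    · exact ⟨0, fun h => absurd h hg⟩
  choose q hqq using hq'
  obtain ⟨d, P, r, i₀, hP, hd, hP1, hinj, hr, hi₀⟩ := exists_roots hθ
  have hmC : (m : ℂ) ≠ 0 := by exact_mod_cast hm
  have hb : bmat S q (r i₀) = (algebraMap ℂ (Matrix (Fin n) (Fin n) (MonoidAlgebra ℂ G)) m) * a := by
    rw [← Algebra.smul_def]
    ext u v : 2
    rw [bmat, Matrix.of_apply, Matrix.smul_apply, hi₀]
    have e : a u v = ∑ g ∈ S, MonoidAlgebra.single g ((a u v).coeff g) := by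
      conv_lhs => rw [← MonoidAlgebra.sum_coeff_single (a u v), Finsupp.sum]
      refine Finset.sum_subset ?_ ?_
      · intro g hg
        exact Finset.mem_biUnion.2 ⟨(u, v), Finset.mem_univ _, hg⟩
      · intro g _ hg
        rw [Finsupp.notMem_support_iff.1 hg, MonoidAlgebra.single_zero]
    conv_rhs => rw [e]
    rw [Finset.smul_sum]
    refine congrArg MonoidAlgebra.coeff (Finset.sum_congr rfl fun g hg => ?_)
    rw [MonoidAlgebra.smul_single, smul_eq_mul, hqq u v g hg]
  have hu : IsUnit (algebraMap ℂ (Matrix (Fin n) (Fin n) (MonoidAlgebra ℂ G)) m) :=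
    (IsUnit.mk0 _ hmC).map _
  have hV : IsUnit (Matrix.vandermonde r) := by
    rw [Matrix.isUnit_iff_isUnit_det, isUnit_iff_ne_zero, Matrix.det_vandermonde_ne_zero_iff]
    exact hinj
  have hdpos : 0 < d := i₀.pos
  have hT := amp_Tmat hP hP1 hd S q r hr
  have hcont := kerDim_int_cont R
    (Matrix.reindexAlgEquiv ℂ (MonoidAlgebra ℂ G) finProdFinEquiv (Tmat d P S q))
    (Nat.mul_pos hn hdpos) (fun x y g => Tmat_int d P S q _ _ g)
  have hsum : Continuous fun φ : LTr G => ∑ i, (R φ).kerDim (bmat S q (r i)) := by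
    refine hcont.congr fun φ => ?_
    exact main_alg (R φ) φ.2.1 φ.2.2.1 _ _ hV hT
  have := cont_of_sum (fun i (φ : LTr G) => (R φ).kerDim (bmat S q (r i)))
    (fun i => kerDim_usc R _) hsum i₀
  refine this.congr fun φ => ?_
  simp only [hb]
  exact (R φ).kerDim_unit_mul a φ.2.2.1 hu

end Final

/-- for `a ∈ Mₙ(ℚ̄ F_∞)` (all coefficients algebraic), the map
`φ ↦ dim_φ(ker a)` is continuous on the set of tracial states on `F_∞` satisfying Lück's
condition, for the topology of pointwise convergence.  (Formally: any function `D` which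
computes `dim_φ(ker a)` in some/any GNS representation of each such `φ` is continuous on
this set.) -/
theorem stmt16 (n : ℕ) (hn : 0 < n)
    (a : Matrix (Fin n) (Fin n) (MonoidAlgebra ℂ (FreeGroup ℕ)))
    (halg : ∀ (i j : Fin n) (g : FreeGroup ℕ), IsAlgebraic ℚ ((a i j).coeff g))
    (D : (FreeGroup ℕ → ℂ) → ℝ)
    (hD : ∀ φ ∈ {φ : FreeGroup ℕ → ℂ | IsGroupTrace φ ∧ φ 1 = 1 ∧ SatisfiesLueck φ},
      ∀ R : GNSRep (FreeGroup ℕ) φ, D φ = R.kerDim a) :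
    ContinuousOn D {φ : FreeGroup ℕ → ℂ | IsGroupTrace φ ∧ φ 1 = 1 ∧ SatisfiesLueck φ} := by
  have hex : ∀ φ : LTr (FreeGroup ℕ), Nonempty (GNSRep (FreeGroup ℕ) φ.1) :=
    fun φ => exists_GNSRep φ.1 φ.2.1.1
  have hc := final_aux n hn a halg (fun φ => (hex φ).some)
  rw [continuousOn_iff_continuous_domRestrict]
  refine hc.congr fun φ => ?_
  exact (hD φ.1 φ.2 (hex φ).some).symm

end
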